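/- There exist absolute constants 0 < c ≤ C such that for every θ ∈ (0,1) and every positive integer n, c · n^{(3-θ)/2} θ^{-1} (1-θ)^{-2} ≤ ∫_{A} G(s,t,u,v) ds dt du dv ≤ C · n^{(3-θ)/2} θ^{-1} (1-θ)^{-2}, where A = { (s,t,u,v) ∈ (0,∞)⁴ : 0 < u < 1, 0 < v < n^{-1/2}, t < n^{1/4}, s ≥ n^{-1/4} u^{1/2} t }. -/

import Mathlib

open MeasureTheory Set Real

/-- The integrand `G(s,t,u,v)` from the paper's computation of the completely 1-summing
norm of the identity `OH_n → ℓ^n_p`, with `θ = 2/p'`. Here `p = (s, t, u, v)`. -/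
noncomputable def G (θ : ℝ) (n : ℕ) (p : ℝ × ℝ × ℝ × ℝ) : ℝ :=
  (n : ℝ) ^ (2 : ℕ) * p.1 ^ (-1 - 2 * θ) * p.2.1 ^ (-1 - 2 * θ) *
    min (min (min ((n : ℝ)⁻¹ * p.1 ^ (4 : ℝ) * p.2.2.1 ^ (-2 : ℝ) * p.2.2.2 ^ (-2 : ℝ))
                  ((n : ℝ)⁻¹ * p.2.1 ^ (4 : ℝ)))
             (min (p.1 ^ (4 : ℝ) * p.2.2.1 ^ (-2 : ℝ)) (p.2.1 ^ (4 : ℝ) * p.2.2.2 ^ (-2 : ℝ))))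
        (min (min (p.2.2.1 ^ (-2 : ℝ) * p.2.2.2 ^ (-2 : ℝ)) (p.2.2.1 ^ (-2 : ℝ)))
             (min 1 (p.2.2.2 ^ (-2 : ℝ))))

/-- The region of integration. -/
def A (n : ℕ) : Set (ℝ × ℝ × ℝ × ℝ) :=
  {p | 0 < p.1 ∧ 0 < p.2.1 ∧ 0 < p.2.2.1 ∧ 0 < p.2.2.2 ∧ p.2.2.1 < 1 ∧ p.2.2.2 < (n : ℝ) ^ (-(1/2) : ℝ) ∧ p.2.1 < (n : ℝ) ^ ((1:ℝ)/4) ∧ (n : ℝ) ^ (-(1/4) : ℝ) * p.2.2.1 ^ ((1:ℝ)/2) * p.2.1 ≤ p.1}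

lemma G_eq_on_A (θ : ℝ) (n : ℕ) (hn : 0 < n) (p : ℝ × ℝ × ℝ × ℝ) (hp : p ∈ A n) :
    G θ n p = (n : ℝ) * p.2.1 ^ (3 - 2 * θ) * p.1 ^ (-1 - 2 * θ) := by
  obtain ⟨s, t, u, v⟩ := p
  obtain ⟨hs, ht, hu, hv, hu1, hv1, ht1, hst⟩ := hp
  simp only at hs ht hu hv hu1 hv1 ht1 hst
  have hN : (1 : ℝ) ≤ n := by exact_mod_cast hn
  have hN0 : (0 : ℝ) < n := by linarith
  have h1 : 1 ≤ u ^ (-2 : ℝ) := Real.one_le_rpow_of_pos_of_le_one_of_nonpos hu hu1.le (by norm_num)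
  have h2 : (n : ℝ) ≤ v ^ (-2 : ℝ) := by
    have := Real.rpow_le_rpow_of_nonpos hv hv1.le (show (-2 : ℝ) ≤ 0 by norm_num)
    rw [← Real.rpow_mul hN0.le] at this
    norm_num at this
    simpa using this
  have h3 : t ^ (4 : ℝ) ≤ n := by
    have := Real.rpow_le_rpow ht.le ht1.le (show (0 : ℝ) ≤ 4 by norm_num)
    rw [← Real.rpow_mul hN0.le] at this
    norm_num at this
    simpa using this
  have ht4 : 0 < t ^ (4 : ℝ) := by positivity
  have h4 : (n : ℝ)⁻¹ * t ^ (4 : ℝ) ≤ s ^ (4 : ℝ) * u ^ (-2 : ℝ) := by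
    have := Real.rpow_le_rpow (by positivity) hst (show (0 : ℝ) ≤ 4 by norm_num)
    rw [Real.mul_rpow (by positivity) ht.le, Real.mul_rpow (by positivity) (by positivity),
      ← Real.rpow_mul hN0.le, ← Real.rpow_mul hu.le,
      show (-(1 / 4) * 4 : ℝ) = -1 by norm_num, show (1 / 2 * 4 : ℝ) = 2 by norm_num,
      Real.rpow_neg_one] at this
    have hh : u ^ (2 : ℝ) * u ^ (-2 : ℝ) = 1 := by
      rw [← Real.rpow_add hu]; norm_num
    calc (n : ℝ)⁻¹ * t ^ (4 : ℝ) = ((n : ℝ)⁻¹ * u ^ (2 : ℝ) * t ^ (4 : ℝ)) * u ^ (-2 : ℝ) := by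
          linear_combination (-(n : ℝ)⁻¹ * t ^ (4 : ℝ)) * hh
      _ ≤ _ := by gcongr
  have hni : (n : ℝ)⁻¹ ≤ 1 := inv_le_one_of_one_le₀ hN
  have hnt : (n : ℝ)⁻¹ * t ^ (4 : ℝ) ≤ 1 := by
    rw [inv_mul_le_iff₀ hN0]; linarith
  have hv2 : 1 ≤ v ^ (-2 : ℝ) := hN.trans h2
  have hnt0 : 0 < (n : ℝ)⁻¹ * t ^ (4 : ℝ) := by positivity
  have h5 : (n : ℝ)⁻¹ * t ^ (4 : ℝ) ≤ (n : ℝ)⁻¹ * s ^ (4 : ℝ) * u ^ (-2 : ℝ) * v ^ (-2 : ℝ) := by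
    have hs4 : 0 < s ^ (4 : ℝ) * u ^ (-2 : ℝ) := by positivity
    calc _ ≤ s ^ (4 : ℝ) * u ^ (-2 : ℝ) := h4
      _ = (n : ℝ)⁻¹ * (s ^ (4 : ℝ) * u ^ (-2 : ℝ)) * n := by field_simp
      _ ≤ (n : ℝ)⁻¹ * (s ^ (4 : ℝ) * u ^ (-2 : ℝ)) * v ^ (-2 : ℝ) := by gcongr
      _ = _ := by ring
  have h6 : (n : ℝ)⁻¹ * t ^ (4 : ℝ) ≤ t ^ (4 : ℝ) * v ^ (-2 : ℝ) := by
    rw [mul_comm]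
    gcongr
    exact hni.trans hv2
  have h7 : 1 ≤ u ^ (-2 : ℝ) * v ^ (-2 : ℝ) := one_le_mul_of_one_le_of_one_le h1 hv2
  unfold G
  simp only
  rw [min_eq_right h5, min_eq_left (le_min h4 h6),
    min_eq_left (le_min (le_min (by linarith) (by linarith)) (le_min hnt (by linarith)))]
  have : t ^ (3 - 2 * θ) = t ^ (-1 - 2 * θ) * t ^ (4 : ℝ) := by
    rw [← Real.rpow_add ht]; congr 1; ring
  rw [this]
  field_simp

lemma measurable_G (θ : ℝ) (n : ℕ) : Measurable (G θ n) := by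
  unfold G
  fun_prop

lemma measurableSet_A (n : ℕ) : MeasurableSet (A n) := by
  unfold A
  simp only [setOf_and]
  refine MeasurableSet.inter (measurableSet_lt (by fun_prop) (by fun_prop)) ?_
  refine MeasurableSet.inter (measurableSet_lt (by fun_prop) (by fun_prop)) ?_
  refine MeasurableSet.inter (measurableSet_lt (by fun_prop) (by fun_prop)) ?_
  refine MeasurableSet.inter (measurableSet_lt (by fun_prop) (by fun_prop)) ?_
  refine MeasurableSet.inter (measurableSet_lt (by fun_prop) (by fun_prop)) ?_
  refine MeasurableSet.inter (measurableSet_lt (by fun_prop) (by fun_prop)) ?_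
  refine MeasurableSet.inter (measurableSet_lt (by fun_prop) (by fun_prop)) ?_
  exact measurableSet_le (by fun_prop) (by fun_prop)

lemma lint_tail (θ x : ℝ) (hθ : 0 < θ) (hx : 0 < x) :
    ∫⁻ s in Ici x, ENNReal.ofReal (s ^ (-1 - 2 * θ)) = ENNReal.ofReal (x ^ (-2 * θ) / (2 * θ)) := by
  have hlt : -1 - 2 * θ < -1 := by linarith
  rw [setLIntegral_congr Ioi_ae_eq_Ici.symm,
    ← ofReal_integral_eq_lintegral_ofReal (integrableOn_Ioi_rpow_of_lt hlt hx),
    integral_Ioi_rpow_of_lt hlt hx]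
  · congr 1
    rw [show -1 - 2 * θ + 1 = -2 * θ by ring]
    field_simp
  · filter_upwards [ae_restrict_mem measurableSet_Ioi] with s hs
    exact Real.rpow_nonneg (hx.trans hs).le _

lemma lint_head (r b : ℝ) (hr : -1 < r) (hb : 0 < b) :
    ∫⁻ t in Ioo 0 b, ENNReal.ofReal (t ^ r) = ENNReal.ofReal (b ^ (r + 1) / (r + 1)) := by
  have hi := (intervalIntegral.intervalIntegrable_rpow' (a := 0) (b := b) hr)
  rw [intervalIntegrable_iff_integrableOn_Ioc_of_le hb.le] at hi
  rw [setLIntegral_congr Ioo_ae_eq_Ioc,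
    ← ofReal_integral_eq_lintegral_ofReal hi, ← intervalIntegral.integral_of_le hb.le,
    integral_rpow (Or.inl hr)]
  · congr 1
    rw [Real.zero_rpow (by linarith), sub_zero]
  · filter_upwards [ae_restrict_mem measurableSet_Ioc] with s hs
    exact Real.rpow_nonneg hs.1.le _

lemma lint_A (θ : ℝ) (hθ : 0 < θ) (hθ1 : θ < 1) (n : ℕ) (hn : 0 < n) :
    ∫⁻ p in A n, ENNReal.ofReal (G θ n p) =
      ENNReal.ofReal ((n : ℝ) ^ ((3 - θ) / 2) * θ ^ (-1 : ℝ) * (1 - θ) ^ (-2 : ℝ) / 8) := by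
  have hN0 : (0 : ℝ) < n := by exact_mod_cast hn
  set N : ℝ := (n : ℝ) with hNdef
  set b : ℝ := N ^ ((1 : ℝ) / 4) with hb
  set m : ℝ := N ^ (-(1 / 2) : ℝ) with hm
  have hb0 : 0 < b := by positivity
  have hm0 : 0 < m := by positivity
  set D : Set (ℝ × ℝ × ℝ) := Ioo 0 b ×ˢ (Ioo 0 1 ×ˢ Ioo 0 m) with hD
  have hDm : MeasurableSet D :=
    measurableSet_Ioo.prod (measurableSet_Ioo.prod measurableSet_Ioo)
  set K : ℝ := N * (N ^ (θ / 2) / (2 * θ)) with hK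
  have hK0 : 0 ≤ K := by positivity
  have hmeas : Measurable ((A n).indicator fun p => ENNReal.ofReal (G θ n p)) :=
    (measurable_G θ n).ennreal_ofReal.indicator (measurableSet_A n)
  rw [← lintegral_indicator (measurableSet_A n), Measure.volume_eq_prod,
    lintegral_prod_symm _ hmeas.aemeasurable]
  have key : ∀ y : ℝ × ℝ × ℝ,
      (∫⁻ s : ℝ, (A n).indicator (fun p => ENNReal.ofReal (G θ n p)) (s, y)) =
      D.indicator (fun y => ENNReal.ofReal K * (ENNReal.ofReal (y.1 ^ (3 - 4 * θ)) *
        (ENNReal.ofReal (y.2.1 ^ (-θ)) * ENNReal.ofReal (y.2.2 ^ (0 : ℝ))))) y := by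
    rintro ⟨t, u, v⟩
    by_cases hy : (t, u, v) ∈ D
    · rw [indicator_of_mem hy]
      obtain ⟨⟨ht, ht1⟩, ⟨hu, hu1⟩, hv, hv1⟩ := hy
      simp only at ht ht1 hu hu1 hv hv1
      set x : ℝ := N ^ (-(1/4) : ℝ) * u ^ ((1:ℝ)/2) * t with hx
      have hx0 : 0 < x := by positivity
      have e : ∀ s : ℝ, (A n).indicator (fun p => ENNReal.ofReal (G θ n p)) (s, t, u, v) =
          (Ici x).indicator (fun s => ENNReal.ofReal (N * t ^ (3 - 2 * θ)) *
            ENNReal.ofReal (s ^ (-1 - 2 * θ))) s := by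
        intro s
        by_cases hs : x ≤ s
        · have hA : (s, t, u, v) ∈ A n :=
            ⟨hx0.trans_le hs, ht, hu, hv, hu1, hv1, ht1, hs⟩
          rw [indicator_of_mem hA, indicator_of_mem (show s ∈ Ici x from hs),
            G_eq_on_A θ n hn _ hA, ENNReal.ofReal_mul (by positivity)]
        · have hA : (s, t, u, v) ∉ A n := fun h => hs h.2.2.2.2.2.2.2
          rw [indicator_of_notMem hA, indicator_of_notMem (show s ∉ Ici x from hs)]
      simp_rw [e]
      rw [lintegral_indicator measurableSet_Ici, lintegral_const_mul _ (by fun_prop),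
        lint_tail θ x hθ hx0, ← ENNReal.ofReal_mul (by positivity),
        ← ENNReal.ofReal_mul (by positivity), ← ENNReal.ofReal_mul (by positivity),
        ← ENNReal.ofReal_mul (by positivity)]
      congr 1
      rw [hx, Real.mul_rpow (by positivity) ht.le, Real.mul_rpow (by positivity) (by positivity),
        ← Real.rpow_mul hN0.le, ← Real.rpow_mul hu.le, hK, Real.rpow_zero,
        show 3 - 4 * θ = (3 - 2 * θ) + (-2 * θ) by ring, Real.rpow_add ht,
        show -(1 / 4) * (-2 * θ) = θ / 2 by ring, show 1 / 2 * (-2 * θ) = -θ by ring]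
      ring
    · rw [indicator_of_notMem hy]
      have e : ∀ s : ℝ, (A n).indicator (fun p => ENNReal.ofReal (G θ n p)) (s, t, u, v) = 0 := by
        intro s
        refine indicator_of_notMem (fun h => hy ?_) _
        obtain ⟨hs, ht, hu, hv, hu1, hv1, ht1, hst⟩ := h
        exact ⟨⟨ht, ht1⟩, ⟨hu, hu1⟩, hv, hv1⟩
      simp [e]
  rw [lintegral_congr key, lintegral_indicator hDm, lintegral_const_mul _ (by fun_prop),
    hD, Measure.volume_eq_prod, ← Measure.prod_restrict,
    lintegral_prod_mul (f := fun t : ℝ => ENNReal.ofReal (t ^ (3 - 4 * θ)))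
      (g := fun y : ℝ × ℝ => ENNReal.ofReal (y.1 ^ (-θ)) * ENNReal.ofReal (y.2 ^ (0 : ℝ)))
      (by fun_prop) (by fun_prop), Measure.volume_eq_prod, ← Measure.prod_restrict,
    lintegral_prod_mul (f := fun t : ℝ => ENNReal.ofReal (t ^ (-θ)))
      (g := fun t : ℝ => ENNReal.ofReal (t ^ (0 : ℝ)))
      (by fun_prop) (by fun_prop),
    lint_head _ _ (by linarith) hb0, lint_head _ _ (by linarith) one_pos,
    lint_head _ _ (by norm_num) hm0]
  have h1 : 0 < 1 - θ := by linarith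
  have h2 : 0 < 3 - 4 * θ + 1 := by linarith
  have h3 : 0 < -θ + 1 := by linarith
  rw [← ENNReal.ofReal_mul (by positivity),
        ← ENNReal.ofReal_mul (by positivity), ← ENNReal.ofReal_mul (by positivity)]
  congr 1
  have e2 : (1 - θ) ^ (-2 : ℝ) = ((1 - θ) ^ 2)⁻¹ := by
    rw [Real.rpow_neg h1.le]; norm_num
  have e3 : N ^ ((3 - θ) / 2) = N * N ^ (θ / 2) * N ^ (1 - θ) * N ^ (-(1 / 2) : ℝ) := by
    nth_rewrite 2 [← Real.rpow_one N]
    rw [← Real.rpow_add hN0, ← Real.rpow_add hN0, ← Real.rpow_add hN0]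
    congr 1; ring
  rw [e2, e3, Real.rpow_neg_one, hK, Real.one_rpow, hb, ← Real.rpow_mul hN0.le, zero_add,
    Real.rpow_one, hm, show 1 / 4 * (3 - 4 * θ + 1) = 1 - θ by ring,
    show 3 - 4 * θ + 1 = 4 * (1 - θ) by ring, show -θ + 1 = 1 - θ by ring]
  field_simp
  norm_num

lemma integral_A (θ : ℝ) (hθ : 0 < θ) (hθ1 : θ < 1) (n : ℕ) (hn : 0 < n) :
    ∫ p in A n, G θ n p =
      (n : ℝ) ^ ((3 - θ) / 2) * θ ^ (-1 : ℝ) * (1 - θ) ^ (-2 : ℝ) / 8 := by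
  have h1 : 0 < 1 - θ := by linarith
  rw [integral_eq_lintegral_of_nonneg_ae, lint_A θ hθ hθ1 n hn, ENNReal.toReal_ofReal]
  · positivity
  · filter_upwards [ae_restrict_mem (measurableSet_A n)] with p hp
    rw [G_eq_on_A θ n hn p hp]
    have ha := hp.1
    have hb := hp.2.1
    simp only [Pi.zero_apply]
    positivity
  · exact (measurable_G θ n).aestronglyMeasurable

theorem stmt_6 :
    ∃ c C : ℝ, 0 < c ∧ c ≤ C ∧ ∀ θ : ℝ, 0 < θ → θ < 1 → ∀ n : ℕ, 0 < n →
      c * ((n : ℝ) ^ ((3 - θ) / 2) * θ ^ (-1 : ℝ) * (1 - θ) ^ (-2 : ℝ)) ≤ (∫ p in A n, G θ n p) ∧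
      (∫ p in A n, G θ n p) ≤ C * ((n : ℝ) ^ ((3 - θ) / 2) * θ ^ (-1 : ℝ) * (1 - θ) ^ (-2 : ℝ)) := by
  refine ⟨1 / 8, 1 / 8, by norm_num, le_rfl, fun θ hθ hθ1 n hn => ?_⟩
  rw [integral_A θ hθ hθ1 n hn]
  constructor <;> apply le_of_eq <;> ring
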